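/- Suppose F(x) = f(x) + P₁(x) − P₂(x) is level-bounded and the function E(x, y, w) = f(x) + P₁(x) − ⟨x, y⟩ + P₂*(y) + (L/2)‖x − w‖² is a KL function. Let {x^k} be the sequence generated by pDCA_e for minimizing F. Then {x^k} converges to a stationary point of F, and moreover ∑_{k=1}^∞ ‖x^k − x^{k−1}‖ < ∞. -/

import Mathlib

/-!
Write `d k = ‖x (k+1) - x k‖` and let `E k` be the potential at the triple
`(x (k+1), ξ (k+1), x k)`. Optimality of the proximal step, convexity of `f` and the descent lemma
give `E (k+1) + c * d k ^ 2 ≤ E k` with `c = L / 2 * (1 - (sup β) ^ 2) > 0`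
(`prox_step_decrease`). Since `F (x (k+1)) ≤ E k`, level-boundedness makes the triples bounded, so
`E` converges to some `ζ` and `d` tends to `0`. The same optimality condition yields a limiting
subgradient of the potential at the triples of norm at most `(4 L + 1) (d (k+1) + d k)`
(`limSubdiff_potE3`, `residual_bound`).

At a cluster point `(a, b, a)` of the triples the subgradient inequalities pass to the limit, so
that `a` is stationary and the potential equals `ζ` there (`subgradE_closed`, `subgrad_closed`).
The subgradients `ξ k` need not converge, so the KL inequality at a single cluster point does not
suffice; `uniform_KL` produces one desingularizing function valid along the whole tail of the
sequence by a compactness argument. The usual telescoping estimate (`summable_of_KL`) then shows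
that `d` is summable; hence `x` is Cauchy, and its limit is the first component of a cluster point.
-/

open Filter Topology Set Metric Bornology
open scoped RealInnerProductSpace

noncomputable section

abbrev Eucl (n : ℕ) := EuclideanSpace ℝ (Fin n)

variable {H : Type*} [NormedAddCommGroup H] [InnerProductSpace ℝ H]

/-- Fréchet (regular) subgradient of an extended-real-valued function. -/
def FrechetSubgradAt (h : H → EReal) (v x : H) : Prop :=
  ∀ ε : ℝ, 0 < ε →
    ∀ᶠ y in 𝓝[≠] x, h x + ((⟪v, y - x⟫ - ε * ‖y - x‖ : ℝ) : EReal) ≤ h y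

/-- Limiting (Mordukhovich) subdifferential. -/
def limSubdiff (h : H → EReal) (x : H) : Set H :=
  {v | ∃ xs vs : ℕ → H,
    Tendsto xs atTop (𝓝 x) ∧
    Tendsto (fun k => h (xs k)) atTop (𝓝 (h x)) ∧
    Tendsto vs atTop (𝓝 v) ∧
    ∀ k, FrechetSubgradAt h (vs k) (xs k)}

/-- Convex subgradient of a real-valued function. -/
def ConvexSubgradAt (g : H → ℝ) (v x : H) : Prop :=
  ∀ y, g x + ⟪v, y - x⟫ ≤ g y

/-- Convex subgradient of an extended-real-valued function. -/
def ConvexSubgradAtE (g : H → EReal) (v x : H) : Prop :=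
  ∀ y, g x + ((⟪v, y - x⟫ : ℝ) : EReal) ≤ g y

/-- Convex conjugate of a real-valued function. -/
def conjE (g : H → ℝ) (y : H) : EReal :=
  ⨆ x : H, ((⟪x, y⟫ - g x : ℝ) : EReal)

/-- `P` is proper, closed (lsc) and convex. -/
def ProperClosedConvexE (P : H → EReal) : Prop :=
  (∀ x, P x ≠ ⊥) ∧ (∃ x, P x ≠ ⊤) ∧ LowerSemicontinuous P ∧
  (∀ x y : H, ∀ t : ℝ, t ∈ Ioo (0:ℝ) 1 →
    P (t • x + (1 - t) • y) ≤ (t : EReal) * P x + ((1 - t : ℝ) : EReal) * P y)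

/-- KL property with exponent `α` at a point. -/
def KLExpAt (h : H → EReal) (α : ℝ) (x₀ : H) : Prop :=
  ∃ c > (0:ℝ), ∃ ε > (0:ℝ), ∃ a > (0:ℝ), ∀ x : H,
    ‖x - x₀‖ ≤ ε → h x₀ < h x → h x < h x₀ + (a : EReal) →
    (limSubdiff h x).Nonempty →
    1 ≤ c * (1 - α) * ((h x).toReal - (h x₀).toReal) ^ (-α) * infDist 0 (limSubdiff h x)

/-- KL function with exponent `α`. -/
def IsKLWithExp (h : H → EReal) (α : ℝ) : Prop :=
  ∀ x₀ : H, (limSubdiff h x₀).Nonempty → KLExpAt h α x₀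

/-- KL property (general desingularizing function) at a point. -/
def KLAt (h : H → EReal) (x₀ : H) : Prop :=
  ∃ a > (0:ℝ), ∃ U ∈ 𝓝 x₀, ∃ φ φd : ℝ → ℝ,
    ContinuousOn φ (Ico 0 a) ∧ ConcaveOn ℝ (Ico 0 a) φ ∧ φ 0 = 0 ∧
    (∀ s ∈ Ico (0:ℝ) a, 0 ≤ φ s) ∧
    (∀ s ∈ Ioo (0:ℝ) a, HasDerivAt φ (φd s) s ∧ 0 < φd s) ∧
    ∀ x ∈ U, h x₀ < h x → h x < h x₀ + (a : EReal) → (limSubdiff h x).Nonempty →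
      1 ≤ φd ((h x).toReal - (h x₀).toReal) * infDist 0 (limSubdiff h x)

/-- KL function. -/
def IsKLFun (h : H → EReal) : Prop :=
  ∀ x₀ : H, (limSubdiff h x₀).Nonempty → KLAt h x₀

/-- The potential function `E(x,y,w) = f(x) + P₁(x) - ⟨x,y⟩ + P₂*(y) + L/2 ‖x-w‖²`. -/
def potE (f : H → ℝ) (P₁ : H → EReal) (P₂ : H → ℝ) (L : ℝ) (x y w : H) : EReal :=
  ((f x : ℝ) : EReal) + P₁ x - ((⟪x, y⟫ : ℝ) : EReal) + conjE P₂ y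
    + ((L / 2 * ‖x - w‖ ^ 2 : ℝ) : EReal)

/-- The pDCAe iteration: `ξ^{k+1} ∈ ∂P₂(x^k)`, `u^k = x^k + β_k (x^k - x^{k-1})` and
`x^{k+1}` is the minimizer of `⟨∇f(u^k) - ξ^{k+1}, ·⟩ + L/2 ‖· - u^k‖² + P₁(·)`.
(`x⁻¹ = x⁰` is encoded by truncated subtraction in `ℕ`.) -/
def IsPDCAe (f' : H → H) (P₁ : H → EReal) (P₂ : H → ℝ) (L : ℝ) (β : ℕ → ℝ)
    (x ξ : ℕ → H) : Prop :=
  P₁ (x 0) ≠ ⊤ ∧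
  (∀ k : ℕ, ConvexSubgradAt P₂ (ξ (k + 1)) (x k)) ∧
  (∀ k : ℕ, ∀ z : H,
    ((⟪f' (x k + β k • (x k - x (k - 1))) - ξ (k + 1), x (k + 1)⟫
        + L / 2 * ‖x (k + 1) - (x k + β k • (x k - x (k - 1)))‖ ^ 2 : ℝ) : EReal)
      + P₁ (x (k + 1))
      ≤ ((⟪f' (x k + β k • (x k - x (k - 1))) - ξ (k + 1), z⟫
        + L / 2 * ‖z - (x k + β k • (x k - x (k - 1)))‖ ^ 2 : ℝ) : EReal) + P₁ z)

/-- Triples `(x, y, w)` with the ℓ² product inner product structure. -/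
abbrev Trip (n : ℕ) := WithLp 2 (Eucl n × WithLp 2 (Eucl n × Eucl n))

def mkTrip {n : ℕ} (a b c : Eucl n) : Trip n :=
  (WithLp.equiv 2 _).symm (a, (WithLp.equiv 2 _).symm (b, c))

/-- `potE` as a function on triples. -/
def potE3 {n : ℕ} (f : Eucl n → ℝ) (P₁ : Eucl n → EReal) (P₂ : Eucl n → ℝ) (L : ℝ)
    (p : Trip n) : EReal :=
  potE f P₁ P₂ L ((WithLp.equiv 2 _) p).1 ((WithLp.equiv 2 _) ((WithLp.equiv 2 _) p).2).1
    ((WithLp.equiv 2 _) ((WithLp.equiv 2 _) p).2).2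

/-! ### First-order inequalities for smooth and convex functions -/

lemma hasDerivAt_line [CompleteSpace H] {f : H → ℝ} {f' : H → H}
    (hf : ∀ y, HasGradientAt f (f' y) y) (a d : H) (t : ℝ) :
    HasDerivAt (fun s : ℝ => f (a + s • d)) ⟪f' (a + t • d), d⟫ t := by
  have h1 : HasDerivAt (fun s : ℝ => a + s • d) d t := by
    simpa using ((hasDerivAt_id t).smul_const d).const_add a
  have h2 := (hf (a + t • d)).hasFDerivAt.comp_hasDerivAt t h1
  rw [InnerProductSpace.toDual_apply_apply] at h2
  exact h2

lemma gradient_ineq [CompleteSpace H] {f : H → ℝ} {f' : H → H}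
    (hconv : ConvexOn ℝ Set.univ f)
    (hf : ∀ y, HasGradientAt f (f' y) y) (a b : H) :
    f a + ⟪f' a, b - a⟫ ≤ f b := by
  have hg : ConvexOn ℝ Set.univ (fun s : ℝ => f (a + s • (b - a))) := by
    have := hconv.comp_affineMap (AffineMap.lineMap a b : ℝ →ᵃ[ℝ] H)
    have e : (fun s : ℝ => f (a + s • (b - a))) = f ∘ (AffineMap.lineMap a b : ℝ →ᵃ[ℝ] H) := by
      ext s
      simp [AffineMap.lineMap_apply, add_comm]
    rw [e]
    exact this
  have hd := hasDerivAt_line hf a (b - a) 0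
  have := hg.le_slope_of_hasDerivAt (mem_univ 0) (mem_univ 1) one_pos hd
  simp [slope_def_field] at this
  linarith

/-- The descent lemma: a function with `L`-Lipschitz gradient lies below its quadratic model. -/
lemma descent_ineq [CompleteSpace H] {f : H → ℝ} {f' : H → H} {L : ℝ}
    (hf : ∀ y, HasGradientAt f (f' y) y)
    (hlip : ∀ y z, ‖f' y - f' z‖ ≤ L * ‖y - z‖) (a b : H) :
    f b ≤ f a + ⟪f' a, b - a⟫ + L / 2 * ‖b - a‖ ^ 2 := by
  set d := b - a with hd
  let g : ℝ → ℝ := fun s => f (a + s • d) - s * ⟪f' a, d⟫ - L / 2 * ‖d‖ ^ 2 * s ^ 2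
  have hg : ∀ t, HasDerivAt g (⟪f' (a + t • d), d⟫ - ⟪f' a, d⟫ - L * ‖d‖ ^ 2 * t) t := by
    intro t
    have h2 : HasDerivAt (fun s : ℝ => s * ⟪f' a, d⟫) ⟪f' a, d⟫ t := by
      simpa using (hasDerivAt_id t).mul_const ⟪f' a, d⟫
    have h3 : HasDerivAt (fun s : ℝ => L / 2 * ‖d‖ ^ 2 * s ^ 2) (L * ‖d‖ ^ 2 * t) t := by
      refine ((hasDerivAt_pow 2 t).const_mul (L / 2 * ‖d‖ ^ 2)).congr_deriv ?_
      push_cast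
      ring
    exact ((hasDerivAt_line hf a d t).sub h2).sub h3
  have hanti : AntitoneOn g (Icc 0 1) := by
    refine antitoneOn_of_deriv_nonpos (convex_Icc 0 1)
      (fun t _ => (hg t).continuousAt.continuousWithinAt)
      (fun t _ => (hg t).differentiableAt.differentiableWithinAt) fun t ht => ?_
    rw [interior_Icc] at ht
    rw [(hg t).deriv, ← inner_sub_left]
    have h1 := real_inner_le_norm (f' (a + t • d) - f' a) d
    have h2 := hlip (a + t • d) a
    rw [add_sub_cancel_left, norm_smul, Real.norm_of_nonneg ht.1.le] at h2
    nlinarith [mul_le_mul_of_nonneg_right h2 (norm_nonneg d)]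
  have := hanti (left_mem_Icc.2 zero_le_one) (right_mem_Icc.2 zero_le_one) zero_le_one
  simp only [g, one_smul, zero_smul, hd, add_sub_cancel, add_zero] at this
  linarith

/-! ### Convex subgradients and conjugates -/

/-- Optimality condition for the proximal subproblem: its minimizer carries an explicit
subgradient of `P`. -/
lemma subgrad_of_min {P : H → EReal} (hP : ProperClosedConvexE P) {L : ℝ} {g u a : H} {p : ℝ}
    (hp : P a = (p : EReal))
    (hmin : ∀ z : H, ((⟪g, a⟫ + L / 2 * ‖a - u‖ ^ 2 : ℝ) : EReal) + P a
      ≤ ((⟪g, z⟫ + L / 2 * ‖z - u‖ ^ 2 : ℝ) : EReal) + P z) :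
    ConvexSubgradAtE P (-(g + L • (a - u))) a := by
  intro y
  obtain hy | hy := eq_or_ne (P y) ⊤
  · rw [hy]; exact le_top
  obtain ⟨q, hq⟩ : ∃ q : ℝ, P y = (q : EReal) :=
    ⟨(P y).toReal, (EReal.coe_toReal hy (hP.1 y)).symm⟩
  rw [hp, hq, ← EReal.coe_add, EReal.coe_le_coe_iff]
  have key : ∀ t : ℝ, t ∈ Ioo (0:ℝ) 1 →
      0 ≤ ⟪g + L • (a - u), y - a⟫ + (q - p) + t * (L / 2 * ‖y - a‖ ^ 2) := by
    intro t ht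
    have h1 := hP.2.2.2 y a t ht
    have h2 := (hmin (t • y + (1 - t) • a)).trans (add_le_add_right h1 _)
    rw [hp, hq] at h2
    norm_cast at h2
    have e1 : t • y + (1 - t) • a = a + t • (y - a) := by module
    have e2 : a + t • (y - a) - u = (a - u) + t • (y - a) := by abel
    rw [e1, e2, norm_add_sq_real, inner_add_right, inner_smul_right, inner_smul_right,
      norm_smul, mul_pow, Real.norm_eq_abs, sq_abs] at h2
    rw [inner_add_left, real_inner_smul_left]
    have : 0 ≤ t * (⟪g, y - a⟫ + L * ⟪a - u, y - a⟫ + (q - p) + t * (L / 2 * ‖y - a‖ ^ 2)) := by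
      nlinarith
    exact nonneg_of_mul_nonneg_right this ht.1
  have hlim : Tendsto (fun t : ℝ => ⟪g + L • (a - u), y - a⟫ + (q - p)
      + t * (L / 2 * ‖y - a‖ ^ 2)) (𝓝[>] 0) (𝓝 (⟪g + L • (a - u), y - a⟫ + (q - p))) := by
    have : Continuous (fun t : ℝ => ⟪g + L • (a - u), y - a⟫ + (q - p)
      + t * (L / 2 * ‖y - a‖ ^ 2)) := by fun_prop
    simpa using (this.tendsto 0).mono_left nhdsWithin_le_nhds
  have := ge_of_tendsto hlim (Filter.mem_of_superset (Ioo_mem_nhdsGT one_pos) key)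
  rw [inner_neg_left]
  linarith

lemma le_conjE (g : H → ℝ) (a y : H) : ((⟪a, y⟫ - g a : ℝ) : EReal) ≤ conjE g y :=
  le_iSup (fun a : H => ((⟪a, y⟫ - g a : ℝ) : EReal)) a

/-- Fenchel equality at a subgradient. -/
lemma conjE_eq_of_subgrad {g : H → ℝ} {v a : H} (h : ConvexSubgradAt g v a) :
    conjE g v = ((⟪a, v⟫ - g a : ℝ) : EReal) := by
  refine le_antisymm (iSup_le fun b => ?_) (le_conjE g a v)
  rw [EReal.coe_le_coe_iff]
  have := h b
  rw [inner_sub_right, real_inner_comm b v, real_inner_comm a v] at this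
  linarith

/-- Subgradients of a continuous function are bounded over bounded sets of base points. -/
lemma subgrad_bounded [ProperSpace H] {g : H → ℝ} (hg : Continuous g) (R : ℝ) :
    ∃ C, ∀ a v : H, ‖a‖ ≤ R → ConvexSubgradAt g v a → ‖v‖ ≤ C := by
  obtain ⟨M, hM⟩ := (isCompact_closedBall (0 : H) (R + 1)).exists_bound_of_continuousOn
    hg.continuousOn
  refine ⟨2 * M, fun a v ha hv => ?_⟩
  have hMa := hM a (by simpa using ha.trans (by linarith))
  obtain rfl | h0 := eq_or_ne v 0
  · rw [norm_zero]; linarith [norm_nonneg (g a)]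
  have hn : ‖v‖ ≠ 0 := norm_ne_zero_iff.2 h0
  have hb := hM (a + ‖v‖⁻¹ • v) (by
    have : ‖a + ‖v‖⁻¹ • v‖ ≤ ‖a‖ + ‖‖v‖⁻¹ • v‖ := norm_add_le _ _
    have h1 : ‖‖v‖⁻¹ • v‖ = 1 := by rw [norm_smul, norm_inv, norm_norm, inv_mul_cancel₀ hn]
    rw [mem_closedBall_zero_iff]
    linarith)
  have h2 := hv (a + ‖v‖⁻¹ • v)
  have h3 : ‖v‖⁻¹ * ‖v‖ ^ 2 = ‖v‖ := by field_simp
  rw [add_sub_cancel_left, inner_smul_right, real_inner_self_eq_norm_sq, h3] at h2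
  rw [Real.norm_eq_abs] at hMa hb
  linarith [(abs_le.1 hMa).1, (abs_le.1 hb).2]

/-! ### Limiting subgradients of the potential -/

/-- An affine minorant up to a quadratic error certifies a limiting subgradient. -/
lemma mem_limSubdiff_of_quadratic {h : H → EReal} {v a : H} {C : ℝ} (hC : 0 ≤ C)
    (hq : ∀ b, h a + ((⟪v, b - a⟫ - C * ‖b - a‖ ^ 2 : ℝ) : EReal) ≤ h b) :
    v ∈ limSubdiff h a := by
  refine ⟨fun _ => a, fun _ => v, tendsto_const_nhds, tendsto_const_nhds, tendsto_const_nhds,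
    fun _ ε hε => ?_⟩
  have hpos : 0 < ε / (C + 1) := by positivity
  filter_upwards [mem_nhdsWithin_of_mem_nhds (Metric.ball_mem_nhds a hpos)] with b hb
  refine le_trans (add_le_add_right ?_ _) (hq b)
  rw [EReal.coe_le_coe_iff]
  rw [mem_ball_iff_norm, lt_div_iff₀ (by positivity)] at hb
  nlinarith [norm_nonneg (b - a)]

/-- A limiting subgradient of the potential at `(a, y, w)`, built from `v ∈ ∂P₁(a)` and a point `s`
with `y ∈ ∂P₂(s)` (equivalently `s ∈ ∂P₂*(y)`). Every term of the potential is convex except the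
bilinear one, whose linearization error is quadratic. -/
lemma limSubdiff_potE3 {n : ℕ} {f : Eucl n → ℝ} {f' : Eucl n → Eucl n} {P₁ : Eucl n → EReal}
    {P₂ : Eucl n → ℝ} {L : ℝ} (hL : 0 < L) (hfconv : ConvexOn ℝ Set.univ f)
    (hfgrad : ∀ y, HasGradientAt f (f' y) y) {a y w v s : Eucl n} {p : ℝ}
    (hp : P₁ a = (p : EReal)) (hv : ConvexSubgradAtE P₁ v a) (hs : ConvexSubgradAt P₂ y s) :
    mkTrip (f' a + v - y + L • (a - w)) (s - a) (-(L • (a - w)))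
      ∈ limSubdiff (potE3 f P₁ P₂ L) (mkTrip a y w) := by
  refine mem_limSubdiff_of_quadratic (C := 1) zero_le_one fun b => ?_
  obtain ⟨a', y', w', rfl⟩ : ∃ a' y' w', b = mkTrip a' y' w' :=
    ⟨b.fst, b.snd.fst, b.snd.snd, rfl⟩
  have h1 := gradient_ineq hfconv hfgrad a a'
  have h2 := hv a'
  have h3 := le_conjE P₂ s y'
  have hnorm : ‖mkTrip a' y' w' - mkTrip a y w‖ ^ 2
      = ‖a' - a‖ ^ 2 + (‖y' - y‖ ^ 2 + ‖w' - w‖ ^ 2) := by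
    rw [WithLp.prod_norm_sq_eq_of_L2, WithLp.prod_norm_sq_eq_of_L2]
    rfl
  have hin : ⟪mkTrip (f' a + v - y + L • (a - w)) (s - a) (-(L • (a - w))),
      mkTrip a' y' w' - mkTrip a y w⟫ = ⟪f' a + v - y + L • (a - w), a' - a⟫
        + (⟪s - a, y' - y⟫ + ⟪-(L • (a - w)), w' - w⟫) := by
    rw [WithLp.prod_inner_apply]
    congr 1
  rw [hnorm, hin]
  change ((f a : ℝ) : EReal) + P₁ a - ((⟪a, y⟫ : ℝ) : EReal) + conjE P₂ y
    + ((L / 2 * ‖a - w‖ ^ 2 : ℝ) : EReal) + _ ≤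
    ((f a' : ℝ) : EReal) + P₁ a' - ((⟪a', y'⟫ : ℝ) : EReal) + conjE P₂ y'
    + ((L / 2 * ‖a' - w'‖ ^ 2 : ℝ) : EReal)
  rw [conjE_eq_of_subgrad hs]
  refine le_trans ?_ (add_le_add_left (add_le_add (EReal.sub_le_sub
    (add_le_add_right h2 _) le_rfl) h3) _)
  have hreal : f a - ⟪a, y⟫ + (⟪s, y⟫ - P₂ s) + L / 2 * ‖a - w‖ ^ 2
      + (⟪f' a + v - y + L • (a - w), a' - a⟫ + (⟪s - a, y' - y⟫ + ⟪-(L • (a - w)), w' - w⟫)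
        - 1 * (‖a' - a‖ ^ 2 + (‖y' - y‖ ^ 2 + ‖w' - w‖ ^ 2)))
      ≤ f a' + ⟪v, a' - a⟫ - ⟪a', y'⟫ + (⟪s, y'⟫ - P₂ s) + L / 2 * ‖a' - w'‖ ^ 2 := by
    have hc := real_inner_le_norm (a' - a) (y' - y)
    have hsq : ‖a' - w'‖ ^ 2 = ‖a - w‖ ^ 2 + 2 * ⟪a - w, (a' - a) - (w' - w)⟫
        + ‖(a' - a) - (w' - w)‖ ^ 2 := by
      rw [← norm_add_sq_real]; congr 2; abel
    have hLn : 0 ≤ L / 2 * ‖(a' - a) - (w' - w)‖ ^ 2 := by positivity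
    have hprod : ‖a' - a‖ * ‖y' - y‖ ≤ ‖a' - a‖ ^ 2 + ‖y' - y‖ ^ 2 := by
      nlinarith [sq_nonneg (‖a' - a‖ - ‖y' - y‖), sq_nonneg ‖a' - a‖, sq_nonneg ‖y' - y‖]
    have hbil : ⟪a', y'⟫ = ⟪a, y⟫ + ⟪y, a' - a⟫ + ⟪a, y' - y⟫ + ⟪a' - a, y' - y⟫ := by
      rw [real_inner_comm _ y]
      simp only [inner_sub_left, inner_sub_right]
      ring
    rw [hsq, hbil]
    simp only [inner_add_left, inner_sub_left, inner_neg_left, real_inner_smul_left,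
      inner_sub_right] at *
    nlinarith [sq_nonneg ‖w' - w‖]
  rw [hp]
  norm_cast
  linarith
/-! ### The Kurdyka–Łojasiewicz argument -/

/-- `φ` is a desingularizing function on `[0, a)` with derivative `φd`. Only the properties used
by the finite-length argument are recorded: concavity, nonnegativity and positive derivative. -/
structure IsDesing (a : ℝ) (φ φd : ℝ → ℝ) : Prop where
  concave : ConcaveOn ℝ (Ico 0 a) φ
  nonneg : ∀ s ∈ Ico (0:ℝ) a, 0 ≤ φ s
  deriv : ∀ s ∈ Ioo (0:ℝ) a, HasDerivAt φ (φd s) s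
  pos : ∀ s ∈ Ioo (0:ℝ) a, 0 < φd s

lemma IsDesing.mono {a b : ℝ} {φ φd : ℝ → ℝ} (h : IsDesing a φ φd) (hab : b ≤ a) :
    IsDesing b φ φd where
  concave := h.concave.subset (Ico_subset_Ico_right hab) (convex_Ico 0 b)
  nonneg s hs := h.nonneg s (Ico_subset_Ico_right hab hs)
  deriv s hs := h.deriv s (Ioo_subset_Ioo_right hab hs)
  pos s hs := h.pos s (Ioo_subset_Ioo_right hab hs)

lemma IsDesing.add {a : ℝ} {φ φd ψ ψd : ℝ → ℝ} (h : IsDesing a φ φd) (h' : IsDesing a ψ ψd) :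
    IsDesing a (φ + ψ) (φd + ψd) where
  concave := h.concave.add h'.concave
  nonneg s hs := add_nonneg (h.nonneg s hs) (h'.nonneg s hs)
  deriv s hs := (h.deriv s hs).add (h'.deriv s hs)
  pos s hs := add_pos (h.pos s hs) (h'.pos s hs)

lemma isDesing_id : IsDesing 1 id (fun _ => 1) where
  concave := concaveOn_id (convex_Ico 0 1)
  nonneg _ hs := hs.1
  deriv s _ := hasDerivAt_id s
  pos _ _ := one_pos

/-- Uniformized KL inequality along a precompact sequence. If `h` takes the value `ζ` and has the
KL property at every cluster point of `Z`, a single desingularizing function works for all large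
indices: cover the compact set by finitely many neighbourhoods, each either left by `Z`
eventually or provided by the KL property, and add up the desingularizing functions. -/
lemma uniform_KL {h : H → EReal} {Z : ℕ → H} {K : Set H} (hK : IsCompact K)
    (hZ : ∀ k, Z k ∈ K) {ζ : ℝ} {e D : ℕ → ℝ}
    (he : ∀ k, h (Z k) = ((ζ + e k : ℝ) : EReal))
    (hcl : ∀ p, MapClusterPt p atTop Z → h p = (ζ : EReal) ∧ KLAt h p)
    (hD : ∀ k, ∃ v ∈ limSubdiff h (Z k), ‖v‖ ≤ D k) :
    ∃ a > (0:ℝ), ∃ φ φd : ℝ → ℝ, IsDesing a φ φd ∧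
      ∀ᶠ k in atTop, 0 < e k → e k < a → 1 ≤ φd (e k) * D k := by
  have hD0 : ∀ k, 0 ≤ D k := fun k =>
    let ⟨v, _, hv⟩ := hD k
    (norm_nonneg v).trans hv
  have main : ∃ a > (0:ℝ), ∃ φ φd : ℝ → ℝ, IsDesing a φ φd ∧
      ∀ᶠ k in atTop, Z k ∈ K → 0 < e k → e k < a → 1 ≤ φd (e k) * D k := by
    refine hK.induction_on (p := fun S => ∃ a > (0:ℝ), ∃ φ φd : ℝ → ℝ, IsDesing a φ φd ∧
      ∀ᶠ k in atTop, Z k ∈ S → 0 < e k → e k < a → 1 ≤ φd (e k) * D k) ?_ ?_ ?_ ?_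
    · exact ⟨1, one_pos, _, _, isDesing_id, Eventually.of_forall fun k hk => hk.elim⟩
    · rintro S T hST ⟨a, ha, φ, φd, hφ, hev⟩
      exact ⟨a, ha, φ, φd, hφ, hev.mono fun k hk hS => hk (hST hS)⟩
    · rintro S T ⟨a, ha, φ, φd, hφ, hev⟩ ⟨b, hb, ψ, ψd, hψ, hev'⟩
      refine ⟨min a b, lt_min ha hb, φ + ψ, φd + ψd,
        (hφ.mono (min_le_left a b)).add (hψ.mono (min_le_right a b)), ?_⟩
      filter_upwards [hev, hev'] with k h1 h2 hk h0 hlt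
      have hlta := hlt.trans_le (min_le_left a b)
      have hltb := hlt.trans_le (min_le_right a b)
      have hp1 := mul_nonneg (hφ.pos _ ⟨h0, hlta⟩).le (hD0 k)
      have hp2 := mul_nonneg (hψ.pos _ ⟨h0, hltb⟩).le (hD0 k)
      rw [Pi.add_apply, add_mul]
      rcases hk with hk | hk
      · linarith [h1 hk h0 hlta]
      · linarith [h2 hk h0 hltb]
    · intro p _
      by_cases hp : MapClusterPt p atTop Z
      · obtain ⟨hpz, a, ha, U, hU, φ, φd, -, hconc, -, hnn, hder, hineq⟩ := hcl p hp
        refine ⟨U, mem_nhdsWithin_of_mem_nhds hU, a, ha, φ, φd,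
          ⟨hconc, hnn, fun s hs => (hder s hs).1, fun s hs => (hder s hs).2⟩,
          Eventually.of_forall fun k hk h0 hlt => ?_⟩
        obtain ⟨v, hv, hvD⟩ := hD k
        have h1 := hineq (Z k) hk
          (by rw [hpz, he, EReal.coe_lt_coe_iff]; linarith)
          (by rw [hpz, he, ← EReal.coe_add, EReal.coe_lt_coe_iff]; linarith) ⟨v, hv⟩
        rw [hpz, he, EReal.toReal_coe, EReal.toReal_coe, add_sub_cancel_left] at h1
        have h2 : infDist 0 (limSubdiff h (Z k)) ≤ D k := by
          refine (infDist_le_dist_of_mem hv).trans ?_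
          rwa [dist_zero_left]
        exact h1.trans (mul_le_mul_of_nonneg_left h2 (hder _ ⟨h0, hlt⟩).2.le)
      · rw [mapClusterPt_iff_frequently] at hp
        push Not at hp
        obtain ⟨U, hU, hev⟩ := hp
        exact ⟨U, mem_nhdsWithin_of_mem_nhds hU, 1, one_pos, _, _, isDesing_id,
          hev.mono fun k hk hkU => (hk hkU).elim⟩
  obtain ⟨a, ha, φ, φd, hφ, hev⟩ := main
  exact ⟨a, ha, φ, φd, hφ, hev.mono fun k hk => hk (hZ k)⟩

/-- Finite length from sufficient decrease and the KL inequality. Concavity gives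
`d (k+1) ^ 2 ≤ (C / c) * (φ (e (k+1)) - φ (e (k+2))) * (d (k+1) + d k)`, and the arithmetic–geometric
mean inequality turns this into a telescoping estimate. -/
lemma summable_of_KL {e d : ℕ → ℝ} {a c C : ℝ} {φ φd : ℝ → ℝ} (ha : 0 < a) (hc : 0 < c)
    (hC : 0 < C) (hφ : IsDesing a φ φd) (hd : ∀ k, 0 ≤ d k) (he : ∀ k, 0 ≤ e k)
    (hlim : Tendsto e atTop (𝓝 0)) (hdec : ∀ k, e (k + 1) + c * d k ^ 2 ≤ e k)
    (hKL : ∀ᶠ k in atTop, 0 < e (k + 1) → e (k + 1) < a →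
      1 ≤ φd (e (k + 1)) * (C * (d (k + 1) + d k))) :
    Summable d := by
  obtain ⟨N, hN⟩ := eventually_atTop.1 (hKL.and (hlim.eventually (gt_mem_nhds ha)))
  set M := C / c with hM
  have hMpos : 0 < M := div_pos hC hc
  have step : ∀ k ≥ N, 2 * d (k + 1) + (4 * M * φ (e (k + 2)) + d (k + 1))
      ≤ 4 * M * φ (e (k + 1)) + d k := by
    intro k hk
    have h1 := (hN k hk).1
    have hlt := (hN (k + 1) (by lia)).2
    have hlt' := (hN (k + 2) (by lia)).2
    have hdk := hdec (k + 1)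
    obtain h0 | h0 := (he (k + 1)).eq_or_lt
    · have h2 : c * d (k + 1) ^ 2 ≤ 0 := by linarith [he (k + 2)]
      have h3 : d (k + 1) = 0 := by
        have : d (k + 1) ^ 2 ≤ 0 := by nlinarith [sq_nonneg (d (k + 1))]
        exact pow_eq_zero_iff two_ne_zero |>.1 (le_antisymm this (sq_nonneg _))
      have h4 : e (k + 2) = e (k + 1) := by
        refine le_antisymm ?_ (h0 ▸ he (k + 2))
        nlinarith [sq_nonneg (d (k + 1))]
      rw [h4, h3]
      linarith [hd k]
    · have hkl := h1 h0 hlt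
      have hpos := hφ.pos _ ⟨h0, hlt⟩
      have htan : φd (e (k + 1)) * (e (k + 1) - e (k + 2)) ≤ φ (e (k + 1)) - φ (e (k + 2)) := by
        have hle : e (k + 2) ≤ e (k + 1) := by nlinarith [sq_nonneg (d (k + 1))]
        obtain h | h := hle.eq_or_lt
        · rw [h]; simp
        · have := hφ.concave.le_slope_of_hasDerivAt ⟨he (k + 2), hlt'⟩ ⟨he (k + 1), hlt⟩ h
            (hφ.deriv _ ⟨h0, hlt⟩)
          rwa [slope_def_field, le_div_iff₀ (by linarith)] at this
      set Δ := φ (e (k + 1)) - φ (e (k + 2)) with hΔ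
      set S := d (k + 1) + d k with hS
      have hSn : 0 ≤ S := add_nonneg (hd _) (hd _)
      have hq : φd (e (k + 1)) * (c * d (k + 1) ^ 2) ≤ Δ :=
        (mul_le_mul_of_nonneg_left (by linarith) hpos.le).trans htan
      have hΔn : 0 ≤ Δ := le_trans (by positivity) hq
      have hsq : d (k + 1) ^ 2 ≤ M * Δ * S := by
        have h5 : c * d (k + 1) ^ 2 ≤ C * S * Δ := by
          calc c * d (k + 1) ^ 2 = 1 * (c * d (k + 1) ^ 2) := (one_mul _).symm
            _ ≤ φd (e (k + 1)) * (C * S) * (c * d (k + 1) ^ 2) :=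
              mul_le_mul_of_nonneg_right hkl (by positivity)
            _ = C * S * (φd (e (k + 1)) * (c * d (k + 1) ^ 2)) := by ring
            _ ≤ C * S * Δ := mul_le_mul_of_nonneg_left hq (by positivity)
        have h6 : c * (M * Δ * S) = C * S * Δ := by rw [hM]; field_simp
        exact le_of_mul_le_mul_left (h6 ▸ h5) hc
      have hfin : d (k + 1) ≤ M * Δ + S / 4 := by
        refine le_of_sq_le_sq ?_ (by positivity)
        nlinarith [sq_nonneg (M * Δ - S / 4)]
      have : M * Δ = M * φ (e (k + 1)) - M * φ (e (k + 2)) := by rw [hΔ]; ring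
      linarith
  rw [← summable_nat_add_iff (N + 1)]
  refine summable_of_sum_range_le (c := (4 * M * φ (e (N + 1)) + d N) / 2)
    (fun k => hd _) fun m => ?_
  have hind : ∀ m, 2 * ∑ i ∈ Finset.range m, d (i + (N + 1))
      + (4 * M * φ (e (m + N + 1)) + d (m + N)) ≤ 4 * M * φ (e (N + 1)) + d N := by
    intro m
    induction m with
    | zero => simp
    | succ m ih =>
      have := step (m + N) (by lia)
      rw [Finset.sum_range_succ, mul_add]
      have e1 : m + 1 + N + 1 = m + N + 2 := by ring
      have e2 : m + 1 + N = m + N + 1 := by ring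
      rw [e1, e2, ← add_assoc m N 1]
      linarith
  have h1 := hind m
  have h2 := hφ.nonneg _ ⟨he (m + N + 1), (hN (m + N + 1) (by lia)).2⟩
  have h3 : 0 ≤ 4 * M * φ (e (m + N + 1)) := by positivity
  linarith [hd (m + N)]
/-! ### One step of the algorithm -/

lemma norm_mkTrip_le {n : ℕ} (a b c : Eucl n) : ‖mkTrip a b c‖ ≤ ‖a‖ + ‖b‖ + ‖c‖ := by
  have h : ‖mkTrip a b c‖ ^ 2 = ‖a‖ ^ 2 + (‖b‖ ^ 2 + ‖c‖ ^ 2) := by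
    rw [WithLp.prod_norm_sq_eq_of_L2, WithLp.prod_norm_sq_eq_of_L2]
    rfl
  refine le_of_sq_le_sq ?_ (by positivity)
  rw [h]
  nlinarith [mul_nonneg (norm_nonneg a) (norm_nonneg b), mul_nonneg (norm_nonneg a) (norm_nonneg c),
    mul_nonneg (norm_nonneg b) (norm_nonneg c)]

/-- Sufficient decrease of one proximal step from `a` to `b`, linearized at `u`. -/
lemma prox_step_decrease [CompleteSpace H] {f : H → ℝ} {f' : H → H} {P : H → EReal} {L : ℝ}
    (hconv : ConvexOn ℝ Set.univ f) (hf : ∀ y, HasGradientAt f (f' y) y)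
    (hlip : ∀ y z, ‖f' y - f' z‖ ≤ L * ‖y - z‖) {a b u ξ : H} {p q : ℝ}
    (hp : P a = (p : EReal)) (hq : P b = (q : EReal))
    (hsub : ConvexSubgradAtE P (-(f' u - ξ + L • (b - u))) b) :
    f b + q - ⟪ξ, b - a⟫ + L / 2 * ‖b - a‖ ^ 2 ≤ f a + p + L / 2 * ‖a - u‖ ^ 2 := by
  have h1 := hsub a
  rw [hp, hq, ← EReal.coe_add, EReal.coe_le_coe_iff] at h1
  have h2 := descent_ineq hf hlip u b
  have h3 := gradient_ineq hconv hf u a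
  have h4 : ‖a - u‖ ^ 2 = ‖b - u‖ ^ 2 + 2 * ⟪b - u, a - b⟫ + ‖b - a‖ ^ 2 := by
    rw [norm_sub_rev b a, ← norm_add_sq_real]; congr 2; abel
  have h5 : ⟪f' u, a - u⟫ = ⟪f' u, a - b⟫ + ⟪f' u, b - u⟫ := by
    rw [← inner_add_right]; congr 1; abel
  have h6 : ⟪ξ, b - a⟫ = - ⟪ξ, a - b⟫ := by rw [← inner_neg_right]; congr 1; abel
  rw [inner_neg_left, inner_add_left, inner_sub_left, real_inner_smul_left] at h1
  rw [h4, h6]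
  rw [h5] at h3
  nlinarith

/-- The subgradient of the potential produced by one step is controlled by the last two step
lengths `‖b - a‖` and `δ`. -/
lemma residual_bound {n : ℕ} {f' : Eucl n → Eucl n} {L : ℝ} (hL : 0 < L)
    (hlip : ∀ y z, ‖f' y - f' z‖ ≤ L * ‖y - z‖) {a b u ξ : Eucl n} {δ : ℝ}
    (hu : ‖a - u‖ ≤ δ) :
    ‖mkTrip (f' b + -(f' u - ξ + L • (b - u)) - ξ + L • (b - a)) (a - b) (-(L • (b - a)))‖
      ≤ (4 * L + 1) * (‖b - a‖ + δ) := by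
  have e : f' b + -(f' u - ξ + L • (b - u)) - ξ + L • (b - a)
      = (f' b - f' u) - L • (b - u) + L • (b - a) := by abel
  have hbu : ‖b - u‖ ≤ ‖b - a‖ + δ := by
    have := norm_sub_le_norm_sub_add_norm_sub b a u
    linarith
  have h1 : ‖(f' b - f' u) - L • (b - u) + L • (b - a)‖
      ≤ L * ‖b - u‖ + L * ‖b - u‖ + L * ‖b - a‖ := by
    refine (norm_add_le _ _).trans (add_le_add ((norm_sub_le _ _).trans
      (add_le_add (hlip b u) ?_)) ?_) <;>
    rw [norm_smul, Real.norm_of_nonneg hL.le]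
  have h2 := norm_mkTrip_le (f' b + -(f' u - ξ + L • (b - u)) - ξ + L • (b - a))
    (a - b) (-(L • (b - a)))
  rw [e, norm_neg, norm_smul, Real.norm_of_nonneg hL.le, norm_sub_rev a b] at h2
  rw [e]
  have hδ : 0 ≤ δ := (norm_nonneg _).trans hu
  nlinarith [mul_le_mul_of_nonneg_left hbu hL.le, mul_nonneg hL.le hδ]

/-! ### Closedness along convergent subsequences -/

/-- Closedness of the graph of `∂P` together with attentive convergence of the values: if
subgradients and real values converge along `a j → a`, the limit value is `P a` and the limit
vector is a subgradient there. -/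
lemma subgradE_closed {P : H → EReal} (hP : LowerSemicontinuous P) {a v : H} {q : ℝ}
    {as vs : ℕ → H} {qs : ℕ → ℝ} (hval : ∀ j, P (as j) = (qs j : EReal))
    (hsub : ∀ j, ConvexSubgradAtE P (vs j) (as j)) (ha : Tendsto as atTop (𝓝 a))
    (hv : Tendsto vs atTop (𝓝 v)) (hq : Tendsto qs atTop (𝓝 q)) :
    P a = (q : EReal) ∧ ConvexSubgradAtE P v a := by
  have hle : P a ≤ (q : EReal) := by
    by_contra! hlt
    obtain ⟨r, hr1, hr2⟩ := EReal.lt_iff_exists_real_btwn.1 hlt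
    have h1 := ha.eventually (hP a r hr2)
    have h2 := hq.eventually (gt_mem_nhds (EReal.coe_lt_coe_iff.1 hr1))
    obtain ⟨j, hj1, hj2⟩ := (h1.and h2).exists
    rw [hval] at hj1
    exact lt_asymm (EReal.coe_lt_coe_iff.1 hj1) hj2
  have hge : ∀ y, (q : EReal) + ((⟪v, y - a⟫ : ℝ) : EReal) ≤ P y := by
    intro y
    have hlim : Tendsto (fun j => ((qs j + ⟪vs j, y - as j⟫ : ℝ) : EReal)) atTop
        (𝓝 ((q + ⟪v, y - a⟫ : ℝ) : EReal)) :=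
      (continuous_coe_real_ereal.tendsto _).comp
        (hq.add (hv.inner (tendsto_const_nhds.sub ha)))
    rw [← EReal.coe_add]
    refine le_of_tendsto' hlim fun j => ?_
    rw [EReal.coe_add, ← hval]
    exact hsub j y
  have heq : P a = (q : EReal) := le_antisymm hle (by simpa using hge a)
  exact ⟨heq, fun y => heq ▸ hge y⟩

lemma subgrad_closed {g : H → ℝ} (hg : Continuous g) {a v : H} {as vs : ℕ → H}
    (hsub : ∀ j, ConvexSubgradAt g (vs j) (as j)) (ha : Tendsto as atTop (𝓝 a))
    (hv : Tendsto vs atTop (𝓝 v)) : ConvexSubgradAt g v a := fun y =>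
  le_of_tendsto' (((hg.tendsto a).comp ha).add (hv.inner (tendsto_const_nhds.sub ha)))
    fun j => hsub j y

/-! ### Convergence of the whole sequence -/

/-- Theorem 2: if `F` is level-bounded and the potential `E` is a KL function, the whole
sequence generated by pDCAe converges to a stationary point of `F`, and the successive
differences are summable in norm. -/
theorem pDCAe_global_convergence
    {n : ℕ} (f : Eucl n → ℝ) (f' : Eucl n → Eucl n) (P₁ : Eucl n → EReal)
    (P₂ : Eucl n → ℝ) (L : ℝ) (β : ℕ → ℝ) (x ξ : ℕ → Eucl n)
    (hL : 0 < L)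
    (hfconv : ConvexOn ℝ Set.univ f)
    (hfgrad : ∀ y, HasGradientAt f (f' y) y)
    (hflip : ∀ y z, ‖f' y - f' z‖ ≤ L * ‖y - z‖)
    (hP₁ : ProperClosedConvexE P₁)
    (hP₂cont : Continuous P₂)
    (hP₂conv : ConvexOn ℝ Set.univ P₂)
    (hβ : ∀ k, β k ∈ Set.Ico (0:ℝ) 1)
    (hβsup : ∃ B < (1:ℝ), ∀ k, β k ≤ B)
    (hlevel : ∀ γ : ℝ, IsBounded {y : Eucl n |
      ((f y : ℝ) : EReal) + P₁ y - ((P₂ y : ℝ) : EReal) ≤ (γ : EReal)})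
    (hseq : IsPDCAe f' P₁ P₂ L β x ξ)
    (hKL : IsKLFun (potE3 f P₁ P₂ L))
    : ∃ xbar : Eucl n,
      (∃ v₁ v₂ : Eucl n, ConvexSubgradAtE P₁ v₁ xbar ∧ ConvexSubgradAt P₂ v₂ xbar ∧
        f' xbar + v₁ - v₂ = 0) ∧
      Tendsto x atTop (𝓝 xbar) ∧
      Summable (fun k : ℕ => ‖x (k + 1) - x k‖) := by

  obtain ⟨hx0, hξ, hmin⟩ := hseq
  obtain ⟨B, hB1, hB⟩ := hβsup
  have hB0 : 0 ≤ B := (hβ 0).1.trans (hB 0)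
  have hfcont : Continuous f :=
    continuous_iff_continuousAt.2 fun y => (hfgrad y).differentiableAt.continuousAt
  have hf'cont : Continuous f' :=
    (LipschitzWith.of_dist_le_mul (K := ⟨L, hL.le⟩) fun y z => by
      rw [dist_eq_norm, dist_eq_norm]; exact hflip y z).continuous
  -- All iterates lie in the domain of `P₁`; `p k` denotes the real value `P₁ (x k)`.
  have hfin : ∀ k, ∃ q : ℝ, P₁ (x k) = (q : EReal) := by
    have hne : ∀ k, P₁ (x k) ≠ ⊤ := by
      rintro (_ | k)
      · exact hx0
      · intro htop
        have h := hmin k (x 0)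
        rw [htop, EReal.coe_add_top, top_le_iff] at h
        exact EReal.add_ne_top (EReal.coe_ne_top _) hx0 h
    exact fun k => ⟨_, (EReal.coe_toReal (hne k) (hP₁.1 _)).symm⟩
  choose p hp using hfin
  set u : ℕ → Eucl n := fun k => x k + β k • (x k - x (k - 1)) with hu
  set V : ℕ → Eucl n := fun k => -(f' (u k) - ξ (k + 1) + L • (x (k + 1) - u k)) with hV
  have hVsub : ∀ k, ConvexSubgradAtE P₁ (V k) (x (k + 1)) := fun k =>
    subgrad_of_min hP₁ (hp (k + 1)) (hmin k)
  set d : ℕ → ℝ := fun k => ‖x (k + 1) - x k‖ with hd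
  have hd0 : ∀ k, 0 ≤ d k := fun k => norm_nonneg _
  have hxu : ∀ k, ‖x k - u k‖ = β k * ‖x k - x (k - 1)‖ := by
    intro k
    have : x k - u k = -(β k • (x k - x (k - 1))) := by simp [hu]
    rw [this, norm_neg, norm_smul, Real.norm_of_nonneg (hβ k).1]
  -- `E k` is the potential at `(x (k+1), ξ (k+1), x k)`, with the conjugate replaced by its
  -- value from the Fenchel equality.
  set E : ℕ → ℝ := fun k => f (x (k + 1)) + p (k + 1) - ⟪ξ (k + 1), x (k + 1) - x k⟫ - P₂ (x k)
    + L / 2 * d k ^ 2 with hE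
  have hpot : ∀ k, potE3 f P₁ P₂ L (mkTrip (x (k + 1)) (ξ (k + 1)) (x k)) = (E k : EReal) := by
    intro k
    change ((f (x (k + 1)) : ℝ) : EReal) + P₁ (x (k + 1)) - ((⟪x (k + 1), ξ (k + 1)⟫ : ℝ) : EReal)
      + conjE P₂ (ξ (k + 1)) + ((L / 2 * ‖x (k + 1) - x k‖ ^ 2 : ℝ) : EReal) = _
    rw [conjE_eq_of_subgrad (hξ k), hp]
    norm_cast
    simp only [hE, hd, inner_sub_right]
    rw [real_inner_comm (ξ (k + 1)) (x (k + 1)), real_inner_comm (ξ (k + 1)) (x k)]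
    ring
  have hA : ∀ k, E k ≤ f (x k) + p k - P₂ (x k) + L / 2 * (B ^ 2 * ‖x k - x (k - 1)‖ ^ 2) := by
    intro k
    have h1 := prox_step_decrease hfconv hfgrad hflip (hp k) (hp (k + 1)) (hVsub k)
    rw [hxu k, mul_pow] at h1
    have h2 : β k ^ 2 ≤ B ^ 2 := pow_le_pow_left₀ (hβ k).1 (hB k) 2
    have h3 : L / 2 * (β k ^ 2 * ‖x k - x (k - 1)‖ ^ 2)
        ≤ L / 2 * (B ^ 2 * ‖x k - x (k - 1)‖ ^ 2) := by gcongr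
    simp only [hE, hd]
    linarith
  have hlow : ∀ k, f (x (k + 1)) + p (k + 1) - P₂ (x (k + 1)) + L / 2 * d k ^ 2 ≤ E k := by
    intro k
    have := hξ k (x (k + 1))
    simp only [hE]
    linarith
  set c : ℝ := L / 2 * (1 - B ^ 2) with hc
  have hcpos : 0 < c := by
    have : B ^ 2 < 1 := by nlinarith
    have : 0 < 1 - B ^ 2 := by linarith
    positivity
  have hdec : ∀ k, E (k + 1) + c * d k ^ 2 ≤ E k := by
    intro k
    have h1 := hA (k + 1)
    have h2 := hlow k
    rw [Nat.add_sub_cancel] at h1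
    change E (k + 1) ≤ _ + L / 2 * (B ^ 2 * d k ^ 2) at h1
    have : c * d k ^ 2 = L / 2 * d k ^ 2 - L / 2 * (B ^ 2 * d k ^ 2) := by rw [hc]; ring
    linarith
  have hanti : Antitone E := antitone_nat_of_succ_le fun k => by
    have := hdec k
    have : 0 ≤ c * d k ^ 2 := by positivity
    linarith
  -- Level-boundedness confines the iterates to a ball.
  obtain ⟨R, hR⟩ : ∃ R, ∀ k, ‖x k‖ ≤ R := by
    obtain ⟨R, hR⟩ := (hlevel (E 0)).exists_norm_le
    refine ⟨max R ‖x 0‖, fun k => ?_⟩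
    rcases k with _ | k
    · exact le_max_right _ _
    · refine (hR _ ?_).trans (le_max_left _ _)
      rw [Set.mem_ofPred_eq, hp]
      norm_cast
      have h1 := hlow k
      have h2 := hanti (Nat.zero_le k)
      have : 0 ≤ L / 2 * d k ^ 2 := by positivity
      linarith
  obtain ⟨C, hC⟩ := subgrad_bounded hP₂cont R
  have hξC : ∀ k, ‖ξ (k + 1)‖ ≤ C := fun k => hC _ _ (hR k) (hξ k)
  have hbdd : BddBelow (range E) := by
    obtain ⟨M₁, hM₁⟩ := (isCompact_closedBall (0 : Eucl n) R).exists_bound_of_continuousOn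
      hfcont.continuousOn
    obtain ⟨M₂, hM₂⟩ := (isCompact_closedBall (0 : Eucl n) R).exists_bound_of_continuousOn
      hP₂cont.continuousOn
    refine ⟨-M₁ + (p 1 - ‖V 0‖ * (R + R)) - M₂, ?_⟩
    rintro _ ⟨k, rfl⟩
    have hmem : x (k + 1) ∈ closedBall (0 : Eucl n) R := by simpa using hR (k + 1)
    have h1 := (abs_le.1 (hM₁ _ hmem)).1
    have h2 := (abs_le.1 (hM₂ _ hmem)).2
    have h3 := hVsub 0 (x (k + 1))
    rw [hp, hp, ← EReal.coe_add, EReal.coe_le_coe_iff] at h3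
    have h4 := (abs_le.1 (abs_real_inner_le_norm (V 0) (x (k + 1) - x (0 + 1)))).1
    have h5 : ‖x (k + 1) - x (0 + 1)‖ ≤ R + R :=
      (norm_sub_le _ _).trans (add_le_add (hR _) (hR _))
    have h6 := mul_le_mul_of_nonneg_left h5 (norm_nonneg (V 0))
    have h7 := hlow k
    have : 0 ≤ L / 2 * d k ^ 2 := by positivity
    rw [zero_add] at h3 h4 h6
    linarith
  obtain ⟨ζ, hζ⟩ : ∃ ζ, Tendsto E atTop (𝓝 ζ) := ⟨_, tendsto_atTop_ciInf hanti hbdd⟩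
  have hζle : ∀ k, ζ ≤ E k := hanti.le_of_tendsto hζ
  have hdlim : Tendsto d atTop (𝓝 0) := by
    have h1 : Tendsto (fun k => (E k - E (k + 1)) / c) atTop (𝓝 0) := by
      have := (hζ.sub (hζ.comp (tendsto_add_atTop_nat 1))).div_const c
      simpa using this
    have h2 : Tendsto (fun k => d k ^ 2) atTop (𝓝 0) := by
      refine squeeze_zero (fun k => sq_nonneg _) (fun k => ?_) h1
      rw [le_div_iff₀ hcpos]
      linarith [hdec k]
    have h3 := (Real.continuous_sqrt.tendsto 0).comp h2
    rw [Real.sqrt_zero] at h3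
    exact h3.congr fun k => Real.sqrt_sq (hd0 k)
  -- The triples start at index `1`, so that both preceding step lengths are available.
  set Z : ℕ → Trip n := fun k => mkTrip (x (k + 2)) (ξ (k + 2)) (x (k + 1)) with hZ
  have hcluster : ∀ q : Trip n, MapClusterPt q atTop Z →
      potE3 f P₁ P₂ L q = (ζ : EReal) ∧ (limSubdiff (potE3 f P₁ P₂ L) q).Nonempty ∧
      ConvexSubgradAtE P₁ (q.snd.fst - f' q.fst) q.fst ∧ ConvexSubgradAt P₂ q.snd.fst q.fst := by
    intro q hq
    obtain ⟨θ, hθ, hlim⟩ := hq.tendsto_subseq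
    obtain ⟨a, b, w, rfl⟩ : ∃ a b w, q = mkTrip a b w := ⟨q.fst, q.snd.fst, q.snd.snd, rfl⟩
    change _ ∧ _ ∧ ConvexSubgradAtE P₁ (b - f' a) a ∧ ConvexSubgradAt P₂ b a
    have hsnd := ((WithLp.continuous_snd 2 _ _).tendsto _).comp hlim
    have ha : Tendsto (fun j => x (θ j + 2)) atTop (𝓝 a) :=
      ((WithLp.continuous_fst 2 _ _).tendsto _).comp hlim
    have hb : Tendsto (fun j => ξ (θ j + 2)) atTop (𝓝 b) :=
      ((WithLp.continuous_fst 2 _ _).tendsto _).comp hsnd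
    have hw : Tendsto (fun j => x (θ j + 1)) atTop (𝓝 w) :=
      ((WithLp.continuous_snd 2 _ _).tendsto _).comp hsnd
    have hd1 : Tendsto (fun j => d (θ j + 1)) atTop (𝓝 0) :=
      hdlim.comp ((tendsto_add_atTop_nat 1).comp hθ.tendsto_atTop)
    have hwa : w = a := by
      have h1 : Tendsto (fun j => d (θ j + 1)) atTop (𝓝 ‖a - w‖) := (ha.sub hw).norm
      have h2 := tendsto_nhds_unique h1 hd1
      exact (sub_eq_zero.1 (norm_eq_zero.1 h2)).symm
    subst hwa
    have hul : Tendsto (fun j => u (θ j + 1)) atTop (𝓝 w) := by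
      have h1 : Tendsto (fun j => x (θ j + 1) - u (θ j + 1)) atTop (𝓝 0) := by
        refine squeeze_zero_norm (fun j => ?_) (hdlim.comp hθ.tendsto_atTop)
        rw [hxu]
        exact mul_le_of_le_one_left (norm_nonneg _) (hβ _).2.le
      simpa using hw.sub h1
    have hVl : Tendsto (fun j => V (θ j + 1)) atTop (𝓝 (b - f' w)) := by
      have h1 := ((((hf'cont.tendsto w).comp hul).sub hb).add ((ha.sub hul).const_smul L)).neg
      have e : -(f' w - b + L • (w - w)) = b - f' w := by simp
      rw [e] at h1
      exact h1
    have hpl : Tendsto (fun j => p (θ j + 2)) atTop (𝓝 (ζ - f w + P₂ w)) := by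
      have hEl : Tendsto (fun j => E (θ j + 1)) atTop (𝓝 ζ) :=
        hζ.comp ((tendsto_add_atTop_nat 1).comp hθ.tendsto_atTop)
      have h1 := (((hEl.sub ((hfcont.tendsto w).comp ha)).add (hb.inner (ha.sub hw))).add
        ((hP₂cont.tendsto w).comp hw)).sub ((hd1.pow 2).const_mul (L / 2))
      simp only [sub_self, inner_zero_right, add_zero, ne_eq, OfNat.ofNat_ne_zero,
        not_false_eq_true, zero_pow, mul_zero, sub_zero] at h1
      refine h1.congr fun j => ?_
      simp only [hE, Function.comp_apply]
      ring
    obtain ⟨hPw, hsub⟩ := subgradE_closed hP₁.2.2.1 (fun j => hp (θ j + 2))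
      (fun j => hVsub (θ j + 1)) ha hVl hpl
    have hsub2 : ConvexSubgradAt P₂ b w :=
      subgrad_closed hP₂cont (fun j => hξ (θ j + 1)) hw hb
    refine ⟨?_, ⟨_, limSubdiff_potE3 hL hfconv hfgrad hPw hsub hsub2⟩, hsub, hsub2⟩
    change ((f w : ℝ) : EReal) + P₁ w - ((⟪w, b⟫ : ℝ) : EReal)
      + conjE P₂ b + ((L / 2 * ‖w - w‖ ^ 2 : ℝ) : EReal) = _
    rw [conjE_eq_of_subgrad hsub2, hPw, sub_self, norm_zero]
    norm_cast
    ring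
  have hZK : ∀ k, Z k ∈ closedBall (0 : Trip n) (R + C + R) := fun k => by
    rw [mem_closedBall_zero_iff]
    exact (norm_mkTrip_le _ _ _).trans (add_le_add (add_le_add (hR _) (hξC _)) (hR _))
  have : ProperSpace (Trip n) := FiniteDimensional.proper ℝ _
  have hK := isCompact_closedBall (0 : Trip n) (R + C + R)
  obtain ⟨a, ha, φ, φd, hφ, hev⟩ := uniform_KL hK hZK (ζ := ζ) (e := fun k => E (k + 1) - ζ)
    (D := fun k => (4 * L + 1) * (d (k + 1) + d k))
    (fun k => by rw [add_sub_cancel]; exact hpot (k + 1))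
    (fun q hq => ⟨(hcluster q hq).1, hKL q (hcluster q hq).2.1⟩)
    (fun k => ⟨_, limSubdiff_potE3 hL hfconv hfgrad (hp _) (hVsub (k + 1)) (hξ (k + 1)),
      residual_bound hL hflip (by
        rw [hxu]
        exact mul_le_of_le_one_left (norm_nonneg _) (hβ _).2.le)⟩)
  have hsum : Summable d := by
    refine summable_of_KL (e := fun k => E k - ζ) ha hcpos (by positivity : 0 < 4 * L + 1) hφ hd0
      (fun k => sub_nonneg.2 (hζle k)) ?_ (fun k => ?_) hev
    · simpa using hζ.sub_const ζ
    · have := hdec k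
      linarith
  have hcauchy : CauchySeq x := cauchySeq_of_summable_dist (by
    refine hsum.congr fun k => ?_
    rw [dist_comm, dist_eq_norm])
  obtain ⟨xbar, hxbar⟩ := cauchySeq_tendsto_of_complete hcauchy
  obtain ⟨q, -, hq⟩ := hK.exists_mapClusterPt (Filter.tendsto_principal.2
    (Eventually.of_forall hZK) : Tendsto Z atTop (𝓟 _))
  obtain ⟨-, -, hs1, hs2⟩ := hcluster q hq
  have hqx : q.fst = xbar := by
    obtain ⟨θ, hθ, hlim⟩ := hq.tendsto_subseq
    have h1 : Tendsto (fun j => x (θ j + 2)) atTop (𝓝 q.fst) :=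
      ((WithLp.continuous_fst 2 _ _).tendsto _).comp hlim
    exact tendsto_nhds_unique h1
      (hxbar.comp ((tendsto_add_atTop_nat 2).comp hθ.tendsto_atTop))
  rw [hqx] at hs1 hs2
  exact ⟨xbar, ⟨_, _, hs1, hs2, by abel⟩, hxbar, hsum⟩
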